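/- Let β ∈ (0,2], n ∈ ℕ, define φ₁(λ) = log(1 + λ^{β/2}) and φ_{k+1} = φ₁ ∘ φ_k, and let u_n : (0,∞) → (0,∞) be a decreasing function with ∫_0^∞ e^{−λt} u_n(t) dt = 1/φ_n(λ) for all λ > 0. For an integer d ≥ 3, define g_n(r) = ∫_0^∞ (4πt)^{−d/2} e^{−r²/(4t)} u_n(t) dt. Then g_n(r) ≍ r^{−d} (log_n(1/r))^{−2} · ∏_{k=1}^{n−1} (log_k(1/r))^{−1} as r → 0+ (the product being 1 when n = 1). -/

import Mathlib

open MeasureTheory Set Filter Topology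

/-- Iterated geometric stable Laplace exponents: `phiIter β 1 λ = log(1 + λ^{β/2})` and
`phiIter β (n+1) = phiIter β 1 ∘ phiIter β n`. -/
noncomputable def phiIter (β : ℝ) : ℕ → ℝ → ℝ
  | 0, l => l
  | n + 1, l => Real.log (1 + phiIter β n l ^ (β / 2))

/-- Iterated logarithms: `iterLog 1 = log`, `iterLog (k+1) = log ∘ iterLog k`. -/
noncomputable def iterLog : ℕ → ℝ → ℝ
  | 0, x => x
  | n + 1, x => Real.log (iterLog n x)

lemma phi_pos {β : ℝ} (n : ℕ) {l : ℝ} (hl : 0 < l) : 0 < phiIter β n l := by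
  induction n with
  | zero => simpa [phiIter] using hl
  | succ n ih =>
    simp only [phiIter]
    apply Real.log_pos
    have := Real.rpow_pos_of_pos ih (β / 2)
    linarith

lemma phi_mono {β : ℝ} (hβ0 : 0 < β) (n : ℕ) {x y : ℝ} (hx : 0 < x) (hxy : x ≤ y) :
    phiIter β n x ≤ phiIter β n y := by
  induction n with
  | zero => simpa [phiIter] using hxy
  | succ n ih =>
    simp only [phiIter]
    have h1 := Real.rpow_pos_of_pos (phi_pos (β := β) n hx) (β / 2)
    have h2 := Real.rpow_le_rpow (phi_pos (β := β) n hx).le ih (by positivity : 0 ≤ β / 2)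
    apply Real.log_le_log <;> linarith

lemma rpow_two_le {a : ℝ} (ha1 : a ≤ 1) {x y : ℝ} (hx : 0 < x) (ha0 : 0 < a) (hy : 0 < y)
    (hxy : y ≤ 2 * x) : y ^ a ≤ 2 * x ^ a := by
  calc y ^ a ≤ (2 * x) ^ a := Real.rpow_le_rpow hy.le hxy ha0.le
    _ = 2 ^ a * x ^ a := Real.mul_rpow (by norm_num) hx.le
    _ ≤ 2 ^ (1:ℝ) * x ^ a := by
        gcongr
        norm_num
    _ = 2 * x ^ a := by simp

lemma phi_double {β : ℝ} (hβ0 : 0 < β) (hβ2 : β ≤ 2) (n : ℕ) {l : ℝ} (hl : 0 < l) :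
    phiIter β n (2 * l) ≤ 2 * phiIter β n l := by
  induction n with
  | zero => simp [phiIter]
  | succ n ih =>
    simp only [phiIter]
    have hp := phi_pos (β := β) n hl
    have h1 := Real.rpow_pos_of_pos hp (β / 2)
    have h3 := Real.rpow_pos_of_pos (phi_pos (β := β) n (by linarith : 0 < 2 * l)) (β / 2)
    have h2 := rpow_two_le (a := β / 2) (by linarith) hp (by linarith)
      (phi_pos (β := β) n (by linarith : 0 < 2 * l)) ih
    have : 2 * Real.log (1 + phiIter β n l ^ (β / 2))
        = Real.log ((1 + phiIter β n l ^ (β / 2)) ^ 2) := by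
      rw [Real.log_pow]; norm_num
    rw [this]
    apply Real.log_le_log
    · linarith
    · nlinarith

lemma phi_tendsto {β : ℝ} (hβ0 : 0 < β) (n : ℕ) : Tendsto (phiIter β n) atTop atTop := by
  induction n with
  | zero => exact tendsto_id
  | succ n ih =>
    have h1 := (tendsto_rpow_atTop (by positivity : 0 < β / 2)).comp ih
    exact Real.tendsto_log_atTop.comp (tendsto_atTop_add_const_left _ 1 h1)

lemma step_upper {a x y : ℝ} (ha0 : 0 < a) (ha1 : a ≤ 1) (hx : 0 < x) (hxy : x ≤ y) :
    Real.log (1 + y ^ a) - Real.log (1 + x ^ a) ≤ (y - x) / x := by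
  have hy : 0 < y := by linarith
  have h1 := Real.rpow_pos_of_pos hx a
  have h2 := Real.rpow_pos_of_pos hy a
  rw [← Real.log_div (by positivity) (by positivity)]
  have h3 := Real.log_le_sub_one_of_pos (show 0 < (1 + y ^ a) / (1 + x ^ a) by positivity)
  have h4 : 1 ≤ y / x := by rw [le_div_iff₀ hx]; linarith
  have h5 : y ^ a / x ^ a ≤ y / x := by
    rw [← Real.div_rpow hy.le hx.le]
    calc (y / x) ^ a ≤ (y / x) ^ (1:ℝ) := Real.rpow_le_rpow_of_exponent_le h4 ha1
      _ = _ := by simp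
  have h6 : x ^ a ≤ y ^ a := Real.rpow_le_rpow hx.le hxy ha0.le
  have h7 : (1 + y ^ a) / (1 + x ^ a) ≤ y ^ a / x ^ a := by
    rw [div_le_div_iff₀ (by positivity) h1]; nlinarith
  have h8 : (y - x) / x = y / x - 1 := by field_simp
  linarith

lemma step_lower {a x y : ℝ} (ha0 : 0 < a) (ha1 : a ≤ 1) (hx : 1 ≤ x) (hxy : x ≤ y)
    (hy2 : y ≤ 2 * x) :
    a / 6 * ((y - x) / x) ≤ Real.log (1 + y ^ a) - Real.log (1 + x ^ a) := by
  have hx0 : 0 < x := by linarith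
  have hy : 0 < y := by linarith
  have h1 := Real.rpow_pos_of_pos hx0 a
  have h2 := Real.rpow_pos_of_pos hy a
  rw [← Real.log_div (by positivity) (by positivity)]
  have h3 := Real.one_sub_inv_le_log_of_pos (show 0 < (1 + y ^ a) / (1 + x ^ a) by positivity)
  have h6 : x ^ a ≤ y ^ a := Real.rpow_le_rpow hx0.le hxy ha0.le
  have h4 : 1 ≤ x ^ a := Real.one_le_rpow hx ha0.le
  have h5 : y ^ a ≤ 2 * x ^ a := rpow_two_le ha1 hx0 ha0 hy hy2
  have h7 : 1 + a * ((y - x) / (2 * x)) ≤ y ^ a / x ^ a := by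
    rw [← Real.div_rpow hy.le hx0.le, Real.rpow_def_of_pos (by positivity)]
    have e1 := Real.add_one_le_exp (Real.log (y / x) * a)
    have e2 := Real.one_sub_inv_le_log_of_pos (show 0 < y / x by positivity)
    have e3 : (y - x) / (2 * x) ≤ 1 - (y / x)⁻¹ := by
      have : 1 - (y / x)⁻¹ = (y - x) / y := by field_simp
      rw [this]
      apply div_le_div_of_nonneg_left <;> linarith
    nlinarith
  have h8 : (y ^ a / x ^ a - 1) / 3 ≤ 1 - ((1 + y ^ a) / (1 + x ^ a))⁻¹ := by
    have e1 : (y ^ a / x ^ a - 1) / 3 = (y ^ a - x ^ a) / (3 * x ^ a) := by field_simp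
    have e2 : 1 - ((1 + y ^ a) / (1 + x ^ a))⁻¹ = (y ^ a - x ^ a) / (1 + y ^ a) := by
      field_simp; ring
    rw [e1, e2]
    apply div_le_div_of_nonneg_left <;> linarith
  have h9 : a / 6 * ((y - x) / x) = (a * ((y - x) / (2 * x))) / 3 := by field_simp; ring
  rw [h9]
  linarith

lemma delta_bounds {β : ℝ} (hβ0 : 0 < β) (hβ2 : β ≤ 2) (n : ℕ) :
    ∃ c : ℝ, 0 < c ∧ ∀ᶠ l in atTop,
      c * (l / ∏ k ∈ Finset.range n, phiIter β k l) ≤ phiIter β n (2 * l) - phiIter β n l ∧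
      phiIter β n (2 * l) - phiIter β n l ≤ l / ∏ k ∈ Finset.range n, phiIter β k l := by
  induction n with
  | zero =>
    refine ⟨1, one_pos, Eventually.of_forall fun l => ?_⟩
    simp only [phiIter, Finset.range_zero, Finset.prod_empty]
    constructor <;> linarith
  | succ n ih =>
    obtain ⟨c, hc, h⟩ := ih
    refine ⟨β / 2 / 6 * c, by positivity, ?_⟩
    filter_upwards [h, eventually_gt_atTop 0, (phi_tendsto hβ0 n).eventually_ge_atTop 1]
      with l hl hl0 hl1
    have hp := phi_pos (β := β) n hl0
    have hm := phi_mono hβ0 n hl0 (by linarith : l ≤ 2 * l)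
    have hu := step_upper (a := β / 2) (by linarith) (by linarith) hp hm
    have hlo := step_lower (a := β / 2) (by linarith) (by linarith) hl1 hm
      (phi_double hβ0 hβ2 n hl0)
    have hP : 0 < ∏ k ∈ Finset.range n, phiIter β k l :=
      Finset.prod_pos fun k _ => phi_pos k hl0
    rw [Finset.prod_range_succ, ← div_div]
    simp only [phiIter]
    constructor
    · refine le_trans ?_ hlo
      have := div_le_div_of_nonneg_right hl.1 hp.le
      calc _ = β / 2 / 6 * (c * (l / ∏ k ∈ Finset.range n, phiIter β k l) / phiIter β n l) := by
            ring
        _ ≤ _ := by gcongr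
    · exact hu.trans (div_le_div_of_nonneg_right hl.2 hp.le)

/-- the slowly varying function -/
noncomputable def ell (β : ℝ) (m : ℕ) (l : ℝ) : ℝ :=
  1 / (phiIter β (m + 1) l ^ 2 * ∏ k ∈ Finset.range m, phiIter β (k + 1) l)

lemma ell_den_pos {β : ℝ} (m : ℕ) {l : ℝ} (hl : 0 < l) :
    0 < phiIter β (m + 1) l ^ 2 * ∏ k ∈ Finset.range m, phiIter β (k + 1) l :=
  mul_pos (pow_pos (phi_pos _ hl) _) (Finset.prod_pos fun k _ => phi_pos _ hl)

lemma ell_pos {β : ℝ} (m : ℕ) {l : ℝ} (hl : 0 < l) : 0 < ell β m l :=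
  one_div_pos.2 (ell_den_pos m hl)

lemma ell_anti {β : ℝ} (hβ0 : 0 < β) (m : ℕ) {x y : ℝ} (hx : 0 < x) (hxy : x ≤ y) :
    ell β m y ≤ ell β m x := by
  apply one_div_le_one_div_of_le (ell_den_pos m hx)
  apply mul_le_mul
  · exact pow_le_pow_left₀ (phi_pos _ hx).le (phi_mono hβ0 _ hx hxy) 2
  · exact Finset.prod_le_prod (fun k _ => (phi_pos _ hx).le) (fun k _ => phi_mono hβ0 _ hx hxy)
  · exact Finset.prod_nonneg (fun k _ => (phi_pos _ hx).le)
  · positivity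

lemma ell_half {β : ℝ} (hβ0 : 0 < β) (hβ2 : β ≤ 2) (m : ℕ) {l : ℝ} (hl : 0 < l) :
    ell β m (l / 2) ≤ 2 ^ (m + 2) * ell β m l := by
  have hl2 : 0 < l / 2 := by linarith
  have key : ∀ k, phiIter β k l ≤ 2 * phiIter β k (l / 2) := fun k => by
    have := phi_double hβ0 hβ2 k hl2
    rwa [show 2 * (l / 2) = l by ring] at this
  unfold ell
  rw [mul_one_div, div_le_div_iff₀ (ell_den_pos m hl2) (ell_den_pos m hl), one_mul]
  have h1 : phiIter β (m + 1) l ^ 2 ≤ (2 * phiIter β (m+1) (l/2)) ^ 2 :=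
    pow_le_pow_left₀ (phi_pos _ hl).le (key _) 2
  have h2 : ∏ k ∈ Finset.range m, phiIter β (k + 1) l
      ≤ ∏ k ∈ Finset.range m, (2 * phiIter β (k + 1) (l / 2)) :=
    Finset.prod_le_prod (fun k _ => (phi_pos _ hl).le) (fun k _ => key _)
  rw [Finset.prod_mul_distrib, Finset.prod_const, Finset.card_range] at h2
  calc _ ≤ (2 * phiIter β (m+1) (l/2)) ^ 2
        * (2 ^ m * ∏ k ∈ Finset.range m, phiIter β (k + 1) (l / 2)) :=
        mul_le_mul h1 h2 (Finset.prod_nonneg (fun k _ => (phi_pos _ hl).le)) (by positivity)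
    _ = _ := by ring

lemma D_bounds {β : ℝ} (hβ0 : 0 < β) (hβ2 : β ≤ 2) (m : ℕ) :
    ∃ A : ℝ, 0 < A ∧ ∀ᶠ l in atTop,
      A * ell β m l ≤ 1 / phiIter β (m + 1) l - 1 / phiIter β (m + 1) (2 * l) ∧
      1 / phiIter β (m + 1) l - 1 / phiIter β (m + 1) (2 * l) ≤ ell β m l := by
  obtain ⟨c, hc, h⟩ := delta_bounds hβ0 hβ2 (m + 1)
  refine ⟨c / 2, by positivity, ?_⟩
  filter_upwards [h, eventually_gt_atTop 0] with l hl hl0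
  have hl2 : 0 < 2 * l := by linarith
  have hP : 0 < ∏ k ∈ Finset.range m, phiIter β (k + 1) l :=
      Finset.prod_pos fun k _ => phi_pos _ hl0
  rw [Finset.prod_range_succ'] at hl
  have e0 : phiIter β 0 l = l := rfl
  rw [e0] at hl
  set P := ∏ k ∈ Finset.range m, phiIter β (k + 1) l with hPdef
  have eP : l / (P * l) = 1 / P := by field_simp
  rw [eP] at hl
  have hx := phi_pos (β := β) (m + 1) hl0
  have hy := phi_pos (β := β) (m + 1) hl2
  have hxy := phi_mono hβ0 (m + 1) hl0 (by linarith : l ≤ 2 * l)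
  have hd := phi_double hβ0 hβ2 (m + 1) hl0
  have eE : ell β m l = 1 / (phiIter β (m + 1) l ^ 2 * P) := rfl
  rw [eE]
  set x := phiIter β (m + 1) l
  set y := phiIter β (m + 1) (2 * l)
  have e1 : 1 / x - 1 / y = (y - x) / (x * y) := by field_simp
  rw [e1]
  constructor
  · calc c / 2 * (1 / (x ^ 2 * P)) = (c * (1 / P)) / (x * (2 * x)) := by field_simp
      _ ≤ (y - x) / (x * (2 * x)) := by gcongr; exact hl.1
      _ ≤ (y - x) / (x * y) := by
          apply div_le_div_of_nonneg_left (by linarith) (by positivity)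
          gcongr
  · calc (y - x) / (x * y) ≤ (y - x) / (x * x) := by
          apply div_le_div_of_nonneg_left (by linarith) (by positivity)
          gcongr
      _ ≤ (1 / P) / (x * x) := by gcongr; exact hl.2
      _ = _ := by field_simp

lemma iterLog_tendsto (k : ℕ) : Tendsto (iterLog k) atTop atTop := by
  induction k with
  | zero => exact tendsto_id
  | succ k ih => exact Real.tendsto_log_atTop.comp ih

lemma log_step {a c C L x : ℝ} (ha0 : 0 < a) (ha1 : a ≤ 1) (hc : 0 < c)
    (hL1 : 1 ≤ L) (hLC : 2 * C ≤ L) (hLc : -2 * Real.log c ≤ Real.log L) (h1 : c * L ≤ x)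
    (h2 : x ≤ C * L) (hx : 1 ≤ x) :
    a / 2 * Real.log L ≤ Real.log (1 + x ^ a) ∧ Real.log (1 + x ^ a) ≤ 2 * Real.log L := by
  have hx0 : 0 < x := by linarith
  have hp := Real.rpow_pos_of_pos hx0 a
  constructor
  · have e1 : Real.log (x ^ a) ≤ Real.log (1 + x ^ a) := Real.log_le_log hp (by linarith)
    rw [Real.log_rpow hx0] at e1
    have e2 : Real.log (c * L) ≤ Real.log x := Real.log_le_log (by positivity) h1
    rw [Real.log_mul (by positivity) (by positivity)] at e2
    have : a * (Real.log L / 2) ≤ a * Real.log x := by gcongr; linarith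
    linarith
  · have e1 : x ^ a ≤ x := by
      calc x ^ a ≤ x ^ (1:ℝ) := Real.rpow_le_rpow_of_exponent_le hx ha1
        _ = x := by simp
    have : 2 * Real.log L = Real.log (L ^ 2) := by rw [Real.log_pow]; norm_num
    rw [this]
    apply Real.log_le_log (by positivity)
    nlinarith

lemma phi_sq_log {β : ℝ} (hβ0 : 0 < β) (hβ2 : β ≤ 2) (k : ℕ) :
    ∃ c C : ℝ, 0 < c ∧ 0 < C ∧ ∀ᶠ l in atTop,
      c * iterLog (k + 1) l ≤ phiIter β (k + 1) (l ^ 2) ∧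
      phiIter β (k + 1) (l ^ 2) ≤ C * iterLog (k + 1) l := by
  have hsq : Tendsto (fun l : ℝ => l ^ 2) atTop atTop := tendsto_pow_atTop (by norm_num)
  induction k with
  | zero =>
    refine ⟨β / 2 / 2 * 2, 2 * 2, by positivity, by positivity, ?_⟩
    filter_upwards [eventually_ge_atTop 2] with l hl
    have hl2 : 2 ≤ l ^ 2 := by nlinarith
    have := log_step (a := β / 2) (c := 1) (C := 1) (L := l ^ 2) (x := l ^ 2) (by linarith)
      (by linarith) one_pos (by linarith) (by linarith)
      (by simp only [Real.log_one, mul_zero]; exact Real.log_nonneg (by linarith))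
      (by linarith) (by linarith) (by linarith)
    rw [Real.log_pow] at this
    simp only [phiIter, iterLog]
    push_cast at this
    constructor <;> linarith
  | succ k ih =>
    obtain ⟨c, C, hc, hC, h⟩ := ih
    refine ⟨β / 2 / 2, 2, by positivity, by positivity, ?_⟩
    filter_upwards [h, (iterLog_tendsto (k + 1)).eventually_ge_atTop 1,
      (iterLog_tendsto (k + 1)).eventually_ge_atTop (2 * C),
      (iterLog_tendsto (k + 2)).eventually_ge_atTop (-2 * Real.log c),
      ((phi_tendsto hβ0 (k + 1)).comp hsq).eventually_ge_atTop 1] with l h1 h2 h3 h4 h5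
    exact log_step (a := β / 2) (by linarith) (by linarith) hc h2 h3 h4 h1.1 h1.2 h5

/-- target function -/
noncomputable def tgt (m : ℕ) (l : ℝ) : ℝ :=
  1 / (iterLog (m + 1) l ^ 2 * ∏ k ∈ Finset.range m, iterLog (k + 1) l)

lemma prod_comp {β : ℝ} (hβ0 : 0 < β) (hβ2 : β ≤ 2) (m : ℕ) :
    ∃ c C : ℝ, 0 < c ∧ 0 < C ∧ ∀ᶠ l in atTop,
      0 < ∏ k ∈ Finset.range m, iterLog (k + 1) l ∧
      c * ∏ k ∈ Finset.range m, iterLog (k + 1) l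
        ≤ ∏ k ∈ Finset.range m, phiIter β (k + 1) (l ^ 2) ∧
      ∏ k ∈ Finset.range m, phiIter β (k + 1) (l ^ 2)
        ≤ C * ∏ k ∈ Finset.range m, iterLog (k + 1) l := by
  induction m with
  | zero => exact ⟨1, 1, one_pos, one_pos, by simp⟩
  | succ m ih =>
    obtain ⟨c, C, hc, hC, h⟩ := ih
    obtain ⟨c', C', hc', hC', h'⟩ := phi_sq_log hβ0 hβ2 m
    refine ⟨c * c', C * C', by positivity, by positivity, ?_⟩
    filter_upwards [h, h', (iterLog_tendsto (m + 1)).eventually_gt_atTop 0] with l h1 h2 h3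
    simp only [Finset.prod_range_succ]
    obtain ⟨h10, h11, h12⟩ := h1
    refine ⟨mul_pos h10 h3, ?_, ?_⟩
    · calc _ = (c * ∏ k ∈ Finset.range m, iterLog (k + 1) l) * (c' * iterLog (m + 1) l) := by ring
        _ ≤ _ := mul_le_mul h11 h2.1 (by positivity) (le_trans (by positivity) h11)
    · calc _ ≤ (C * ∏ k ∈ Finset.range m, iterLog (k + 1) l) * (C' * iterLog (m + 1) l) :=
            mul_le_mul h12 h2.2 (le_trans (by positivity) h2.1) (by positivity)
        _ = _ := by ring

lemma ell_tgt {β : ℝ} (hβ0 : 0 < β) (hβ2 : β ≤ 2) (m : ℕ) :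
    ∃ c C : ℝ, 0 < c ∧ 0 < C ∧ ∀ᶠ l in atTop, 0 < tgt m l ∧
      c * tgt m l ≤ ell β m (l ^ 2) ∧ ell β m (l ^ 2) ≤ C * tgt m l := by
  obtain ⟨c, C, hc, hC, h⟩ := prod_comp hβ0 hβ2 m
  obtain ⟨c', C', hc', hC', h'⟩ := phi_sq_log hβ0 hβ2 m
  refine ⟨1 / (C' ^ 2 * C), 1 / (c' ^ 2 * c), by positivity, by positivity, ?_⟩
  filter_upwards [h, h', (iterLog_tendsto (m + 1)).eventually_gt_atTop 0,
    eventually_gt_atTop 0] with l h1 h2 h3 h4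
  obtain ⟨h10, h11, h12⟩ := h1
  unfold tgt
  refine ⟨by positivity, ?_, ?_⟩
  · rw [one_div_mul_one_div]
    apply one_div_le_one_div_of_le (ell_den_pos m (by positivity))
    calc _ ≤ (C' * iterLog (m + 1) l) ^ 2 * (C * ∏ k ∈ Finset.range m, iterLog (k + 1) l) := by
          apply mul_le_mul (pow_le_pow_left₀ (phi_pos _ (by positivity)).le h2.2 2) h12
            (le_trans (by positivity) h11) (by positivity)
      _ = _ := by ring
  · rw [one_div_mul_one_div]
    apply one_div_le_one_div_of_le (by positivity)
    calc _ = (c' * iterLog (m + 1) l) ^ 2 * (c * ∏ k ∈ Finset.range m, iterLog (k + 1) l) := by ring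
      _ ≤ _ := by
          apply mul_le_mul (pow_le_pow_left₀ (by positivity) h2.1 2) h11
            (by positivity) (by positivity)

/-- difference kernel -/
noncomputable def Kd (x : ℝ) : ℝ := Real.exp (-x) - Real.exp (-(2 * x))

lemma Kd_eq (x : ℝ) : Kd x = Real.exp (-x) * (1 - Real.exp (-x)) := by
  unfold Kd
  rw [show -(2 * x) = -x + -x by ring, Real.exp_add]; ring

lemma Kd_nonneg {x : ℝ} (hx : 0 ≤ x) : 0 ≤ Kd x := by
  rw [Kd_eq]
  have : Real.exp (-x) ≤ 1 := Real.exp_le_one_iff.2 (by linarith)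
  have := Real.exp_pos (-x)
  apply mul_nonneg <;> linarith

lemma Kd_le_self {x : ℝ} (hx : 0 ≤ x) : Kd x ≤ x := by
  rw [Kd_eq]
  have h1 : Real.exp (-x) ≤ 1 := Real.exp_le_one_iff.2 (by linarith)
  have h2 := Real.exp_pos (-x)
  have h3 := Real.add_one_le_exp (-x)
  nlinarith

lemma Kd_le_exp (x : ℝ) : Kd x ≤ Real.exp (-x) := by
  unfold Kd
  have := Real.exp_pos (-(2 * x))
  linarith

lemma exp_neg_le {x : ℝ} (hx : 0 ≤ x) : Real.exp (-x) ≤ 1 / (1 + x) := by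
  rw [Real.exp_neg, ← one_div]
  apply one_div_le_one_div_of_le (by linarith)
  have := Real.add_one_le_exp x
  linarith

lemma Kd_ge {x : ℝ} (hx : 0 ≤ x) (hx1 : x ≤ 1) : x / 6 ≤ Kd x := by
  rw [Kd_eq]
  have h1 := exp_neg_le hx
  have h2 : 1 / 3 ≤ Real.exp (-x) := by
    rw [Real.exp_neg, ← one_div]
    apply one_div_le_one_div_of_le (Real.exp_pos _)
    have := Real.exp_one_lt_d9
    have : Real.exp x ≤ Real.exp 1 := Real.exp_le_exp.2 hx1
    linarith
  have h3 : x / 2 ≤ 1 - 1 / (1 + x) := by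
    have : 1 - 1 / (1 + x) = x / (1 + x) := by field_simp; ring
    rw [this]
    apply div_le_div_of_nonneg_left <;> linarith
  nlinarith

lemma Kd_ge_exp {x : ℝ} (hx : 1 ≤ x) : Real.exp (-x) / 2 ≤ Kd x := by
  rw [Kd_eq]
  have h1 := exp_neg_le (by linarith : 0 ≤ x)
  have h2 : 1 / (1 + x) ≤ 1 / 2 := one_div_le_one_div_of_le (by norm_num) (by linarith)
  have := Real.exp_pos (-x)
  nlinarith

lemma Kd_split {δ M x : ℝ} (hδ : 0 < δ) (hM : 2 ≤ M) (hx : 0 < x) :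
    Kd x ≤ 6 * δ * Kd (x / δ) + 2 * Real.exp (-(M / 2)) * Kd (x / 2)
      + (if δ < x ∧ x ≤ M then 1 else 0) := by
  have n1 := Kd_nonneg (x := x / δ) (by positivity)
  have n2 := Kd_nonneg (x := x / 2) (by positivity)
  have n3 := Real.exp_pos (-(M / 2))
  have p1 : 0 ≤ 6 * δ * Kd (x / δ) := by positivity
  have p2 : 0 ≤ 2 * Real.exp (-(M / 2)) * Kd (x / 2) := by positivity
  by_cases h1 : δ < x
  · by_cases h2 : x ≤ M
    · rw [if_pos ⟨h1, h2⟩]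
      have := Kd_le_exp x
      have : Real.exp (-x) ≤ 1 := Real.exp_le_one_iff.2 (by linarith)
      linarith
    · rw [if_neg (by tauto)]
      push Not at h2
      have e1 := Kd_le_exp x
      have e2 := Kd_ge_exp (x := x / 2) (by linarith)
      have e3 : Real.exp (-x) = Real.exp (-(x / 2)) * Real.exp (-(x / 2)) := by
        rw [← Real.exp_add]; ring_nf
      have e4 : Real.exp (-(x / 2)) ≤ Real.exp (-(M / 2)) := Real.exp_le_exp.2 (by linarith)
      have e5 := Real.exp_pos (-(x / 2))
      nlinarith
  · rw [if_neg (by tauto)]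
    push Not at h1
    have e1 := Kd_le_self hx.le
    have e2 := Kd_ge (x := x / δ) (by positivity) (by rw [div_le_one hδ]; exact h1)
    have e3 : x = 6 * δ * (x / δ / 6) := by field_simp
    have e4 : 6 * δ * (x / δ / 6) ≤ 6 * δ * Kd (x / δ) := by gcongr
    linarith

lemma u_bounds (un f ell : ℝ → ℝ)
    (hupos : ∀ t, 0 < t → 0 < un t)
    (hudec : ∀ s t, 0 < s → s ≤ t → un t ≤ un s)
    (hint : ∀ l, 0 < l → IntegrableOn (fun t => Real.exp (-(l * t)) * un t) (Ioi 0))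
    (hun : ∀ l, 0 < l → ∫ t in Ioi (0:ℝ), Real.exp (-(l * t)) * un t = f l)
    (hpos : ∀ l, 0 < l → 0 < ell l)
    (hanti : ∀ x y, 0 < x → x ≤ y → ell y ≤ ell x)
    (H : ℝ) (hH : 0 < H) (hhalf : ∀ l, 0 < l → ell (l / 2) ≤ H * ell l)
    (A : ℝ) (hA : 0 < A) (hD : ∀ᶠ l in atTop, A * ell l ≤ f l - f (2 * l) ∧
      f l - f (2 * l) ≤ ell l) :
    ∃ c C t₀ : ℝ, 0 < c ∧ 0 < C ∧ 0 < t₀ ∧ ∀ t, 0 < t → t < t₀ →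
      c * (ell (1 / t) / t) ≤ un t ∧ un t ≤ C * (ell (1 / t) / t) := by
  have hKint : ∀ l, 0 < l → IntegrableOn (fun t => Kd (l * t) * un t) (Ioi 0) := by
    intro l hl
    have := (hint l hl).sub (hint (2 * l) (by linarith))
    refine this.congr (Eventually.of_forall fun t => ?_)
    simp only [Kd, Pi.sub_apply]
    rw [← mul_assoc]; ring
  have hKeq : ∀ l, 0 < l → ∫ t in Ioi (0:ℝ), Kd (l * t) * un t = f l - f (2 * l) := by
    intro l hl
    rw [← hun l hl, ← hun (2 * l) (by linarith), ← integral_sub (hint l hl)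
      (hint (2 * l) (by linarith))]
    congr 1
    ext t
    simp only [Kd]
    rw [← mul_assoc]; ring
  obtain ⟨Λ₀, hΛ₀⟩ := eventually_atTop.1 hD
  set Λ := max Λ₀ 1 with hΛdef
  have hΛ1 : 1 ≤ Λ := le_max_right _ _
  have hΛ : ∀ l, Λ ≤ l → A * ell l ≤ f l - f (2 * l) ∧ f l - f (2 * l) ≤ ell l :=
    fun l hl => hΛ₀ l ((le_max_left _ _).trans hl)
  -- upper bound
  have hup : ∀ l, 0 < l → un (1 / l) * (1 / (24 * l)) ≤ f l - f (2 * l) := by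
    intro l hl
    rw [← hKeq l hl]
    have hsub : Ioc (1 / (2 * l)) (1 / l) ⊆ Ioi 0 := fun t ht =>
      lt_trans (by positivity) ht.1
    have h1 : ∫ t in Ioc (1 / (2 * l)) (1 / l), (1 / 12 * un (1 / l)) ≤
        ∫ t in Ioc (1 / (2 * l)) (1 / l), Kd (l * t) * un t := by
      apply setIntegral_mono_on
      · exact integrableOn_const (by simp)
      · exact (hKint l hl).mono_set hsub
      · exact measurableSet_Ioc
      · intro t ht
        have ht0 : 0 < t := hsub ht
        have hlt1 : l * t ≤ 1 := by
          have := ht.2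
          rw [le_div_iff₀ hl] at this; linarith
        have hlt2 : 1 / 2 ≤ l * t := by
          have := ht.1
          rw [div_lt_iff₀ (by positivity)] at this; linarith
        have k := Kd_ge (by positivity : 0 ≤ l * t) hlt1
        apply mul_le_mul (by linarith) (hudec _ _ ht0 ht.2) (hupos _ (by positivity)).le
          (Kd_nonneg (by positivity))
    have h2 : ∫ t in Ioc (1 / (2 * l)) (1 / l), Kd (l * t) * un t ≤
        ∫ t in Ioi 0, Kd (l * t) * un t := by
      apply setIntegral_mono_set (hKint l hl)
      · filter_upwards [ae_restrict_mem measurableSet_Ioi] with t ht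
        have ht0 : 0 < t := ht
        exact mul_nonneg (Kd_nonneg (by positivity)) (hupos t ht).le
      · exact hsub.eventuallyLE
    refine le_trans (le_of_eq ?_) (h1.trans h2)
    rw [setIntegral_const, Real.volume_real_Ioc_of_le
      (one_div_le_one_div_of_le hl (by linarith))]
    simp only [smul_eq_mul]
    field_simp
    ring
  -- lower bound
  have hlow : ∀ δ M l, 0 < δ → δ ≤ 1 → 2 ≤ M → 0 < l →
      f l - f (2 * l) ≤ 6 * δ * (f (l / δ) - f (2 * (l / δ)))
        + 2 * Real.exp (-(M / 2)) * (f (l / 2) - f (2 * (l / 2))) + un (δ / l) * (M / l) := by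
    intro δ M l hδ hδ1 hM hl
    have hsub : Ioc (δ / l) (M / l) ⊆ Ioi 0 := fun t ht =>
      lt_trans (by positivity) ht.1
    have hi : IntegrableOn ((Ioc (δ / l) (M / l)).indicator (fun _ => un (δ / l))) (Ioi 0) := by
      have : Integrable ((Ioc (δ / l) (M / l)).indicator (fun _ => un (δ / l))) :=
        (integrable_indicator_iff measurableSet_Ioc).2 (integrableOn_const (by simp))
      exact this.integrableOn
    have hi1 := (hKint (l / δ) (by positivity)).const_mul (6 * δ)
    have hi2 := (hKint (l / 2) (by positivity)).const_mul (2 * Real.exp (-(M / 2)))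
    have hi12 : IntegrableOn (fun t => 6 * δ * (Kd (l / δ * t) * un t)
          + 2 * Real.exp (-(M / 2)) * (Kd (l / 2 * t) * un t)) (Ioi 0) := hi1.add hi2
    have hi3 : IntegrableOn (fun t => 6 * δ * (Kd (l / δ * t) * un t)
          + 2 * Real.exp (-(M / 2)) * (Kd (l / 2 * t) * un t)
          + (Ioc (δ / l) (M / l)).indicator (fun _ => un (δ / l)) t) (Ioi 0) := hi12.add hi
    have hle : ∫ t in Ioi (0:ℝ), Kd (l * t) * un t ≤
        ∫ t in Ioi (0:ℝ), (6 * δ * (Kd (l / δ * t) * un t)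
          + 2 * Real.exp (-(M / 2)) * (Kd (l / 2 * t) * un t)
          + (Ioc (δ / l) (M / l)).indicator (fun _ => un (δ / l)) t) := by
      apply setIntegral_mono_on (hKint l hl) hi3 measurableSet_Ioi
      intro t ht
      have ht0 : 0 < t := ht
      have hu := hupos t ht0
      have k := Kd_split (x := l * t) hδ hM (by positivity)
      have k2 := mul_le_mul_of_nonneg_right k hu.le
      have k3 : (if δ < l * t ∧ l * t ≤ M then (1:ℝ) else 0) * un t
          ≤ (Ioc (δ / l) (M / l)).indicator (fun _ => un (δ / l)) t := by
        by_cases hc : δ < l * t ∧ l * t ≤ M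
        · have hm : t ∈ Ioc (δ / l) (M / l) :=
            ⟨by rw [div_lt_iff₀ hl]; linarith [hc.1], by rw [le_div_iff₀ hl]; linarith [hc.2]⟩
          rw [if_pos hc, indicator_of_mem hm, one_mul]
          exact hudec _ _ (by positivity) hm.1.le
        · rw [if_neg hc, zero_mul]
          exact indicator_nonneg (fun _ _ => (hupos _ (by positivity)).le) _
      have e1 : l / δ * t = l * t / δ := by ring
      have e2 : l / 2 * t = l * t / 2 := by ring
      rw [e1, e2]
      linarith
    rw [integral_add hi12 hi, integral_add hi1 hi2, integral_const_mul,
      integral_const_mul, hKeq l hl, hKeq (l / δ) (by positivity), hKeq (l / 2) (by positivity),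
      setIntegral_indicator measurableSet_Ioc, inter_eq_self_of_subset_right hsub,
      setIntegral_const, Real.volume_real_Ioc_of_le
        (div_le_div_of_nonneg_right (by linarith) hl.le)] at hle
    refine hle.trans ?_
    have hu := hupos (δ / l) (by positivity)
    have : (M / l - δ / l) • un (δ / l) ≤ un (δ / l) * (M / l) := by
      rw [smul_eq_mul]
      have : 0 < δ / l := by positivity
      nlinarith
    linarith
  -- choose parameters
  set δ := min 1 (A / 24) with hδdef
  have hδ : 0 < δ := lt_min one_pos (by positivity)
  have hδ1 : δ ≤ 1 := min_le_left _ _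
  have hδA : 6 * δ ≤ A / 4 := by
    have := min_le_right 1 (A / 24); linarith
  obtain ⟨M, hM2, hMe⟩ : ∃ M : ℝ, 2 ≤ M ∧ 2 * Real.exp (-(M / 2)) * H ≤ A / 4 := by
    have ht : Tendsto (fun M : ℝ => Real.exp (-(M / 2))) atTop (𝓝 0) :=
      Real.tendsto_exp_neg_atTop_nhds_zero.comp (tendsto_id.atTop_div_const (by norm_num))
    have := (ht.eventually (gt_mem_nhds (show 0 < A / (8 * H) by positivity))).and
      (eventually_ge_atTop 2)
    obtain ⟨M, hM1, hM2⟩ := this.exists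
    refine ⟨M, hM2, ?_⟩
    have : 2 * (A / (8 * H)) * H = A / 4 := by field_simp; norm_num
    rw [← this]
    gcongr
  refine ⟨A / 2 / M * δ, 24, δ / (2 * Λ), by positivity, by norm_num, by positivity, ?_⟩
  intro t ht0 ht
  have hΛ0 : 0 < Λ := by linarith
  rw [lt_div_iff₀ (by positivity)] at ht
  constructor
  · have hl0 : 0 < δ / t := by positivity
    have hl : 2 * Λ ≤ δ / t := by rw [le_div_iff₀ ht0]; linarith
    have h := hlow δ M (δ / t) hδ hδ1 hM2 hl0
    have eq1 : δ / (δ / t) = t := by field_simp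
    have ge1 : δ / t ≤ δ / t / δ := by
      rw [le_div_iff₀ hδ]; nlinarith
    have b0 := (hΛ (δ / t) (by linarith)).1
    have b1 := (hΛ (δ / t / δ) (by linarith)).2.trans (hanti _ _ hl0 ge1)
    have b2 := (hΛ (δ / t / 2) (by linarith)).2.trans (hhalf _ hl0)
    rw [eq1] at h
    have p := hpos _ hl0
    have c1 : 6 * δ * (f (δ / t / δ) - f (2 * (δ / t / δ))) ≤ A / 4 * ell (δ / t) :=
      (mul_le_mul_of_nonneg_left b1 (by positivity)).trans
        (mul_le_mul_of_nonneg_right hδA p.le)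
    have c2 : 2 * Real.exp (-(M / 2)) * (f (δ / t / 2) - f (2 * (δ / t / 2)))
        ≤ A / 4 * ell (δ / t) := by
      refine (mul_le_mul_of_nonneg_left b2 (by positivity)).trans ?_
      rw [← mul_assoc]
      exact mul_le_mul_of_nonneg_right hMe p.le
    have c3 : A / 2 * ell (δ / t) ≤ un t * (M / (δ / t)) := by linarith
    have c4 : ell (1 / t) ≤ ell (δ / t) := hanti _ _ hl0 (by gcongr)
    have c5 : A / 2 * ell (1 / t) ≤ un t * (M / (δ / t)) := le_trans (by gcongr) c3
    have c6 : un t * (M / (δ / t)) = un t * M * t / δ := by field_simp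
    rw [c6, le_div_iff₀ hδ] at c5
    calc _ = (A / 2 * ell (1 / t) * δ) / (M * t) := by field_simp
      _ ≤ (un t * M * t) / (M * t) := by gcongr
      _ = un t := by field_simp
  · have hl : Λ ≤ 1 / t := by rw [le_div_iff₀ ht0]; nlinarith
    have h := (hup (1 / t) (by positivity)).trans (hΛ _ hl).2
    rw [one_div_one_div] at h
    have e : un t * (1 / (24 * (1 / t))) = un t * t / 24 := by field_simp
    rw [e, div_le_iff₀ (by norm_num)] at h
    calc un t = un t * t / t := by field_simp
      _ ≤ (ell (1 / t) * 24) / t := by gcongr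
      _ = _ := by ring

lemma exp_bound (d : ℕ) (hd : 3 ≤ d) :
    ∃ C₀ : ℝ, 0 < C₀ ∧ ∀ y : ℝ, 1 ≤ y → y ^ ((d:ℝ) / 2 + 1) * Real.exp (-(y / 4)) ≤ C₀ := by
  refine ⟨4 ^ d * (Nat.factorial d), by positivity, fun y hy => ?_⟩
  have hd' : (3:ℝ) ≤ d := by exact_mod_cast hd
  have h1 : y ^ ((d:ℝ) / 2 + 1) ≤ y ^ d := by
    rw [← Real.rpow_natCast y d]
    exact Real.rpow_le_rpow_of_exponent_le hy (by linarith)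
  have h2 := Real.pow_div_factorial_le_exp (y / 4) (by linarith) d
  rw [Real.exp_neg, ← div_eq_mul_inv, div_le_iff₀ (Real.exp_pos _)]
  rw [div_le_iff₀ (by positivity), div_pow, div_le_iff₀ (by positivity)] at h2
  linarith

lemma g_bounds (un ell : ℝ → ℝ)
    (hupos : ∀ t, 0 < t → 0 < un t)
    (hudec : ∀ s t, 0 < s → s ≤ t → un t ≤ un s)
    (hpos : ∀ l, 0 < l → 0 < ell l)
    (hanti : ∀ x y, 0 < x → x ≤ y → ell y ≤ ell x)
    (d : ℕ) (hd : 3 ≤ d)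
    (h : ∃ c C t₀ : ℝ, 0 < c ∧ 0 < C ∧ 0 < t₀ ∧ ∀ t, 0 < t → t < t₀ →
      c * (ell (1 / t) / t) ≤ un t ∧ un t ≤ C * (ell (1 / t) / t)) :
    ∃ c C r₀ : ℝ, 0 < c ∧ 0 < C ∧ 0 < r₀ ∧ ∀ r, 0 < r → r < r₀ →
      c * (r ^ (-(d:ℝ)) * ell ((1 / r) ^ 2)) ≤ (∫ t in Ioi (0:ℝ),
        (4 * Real.pi * t) ^ (-(d:ℝ) / 2) * Real.exp (-(r ^ 2 / (4 * t))) * un t) ∧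
      (∫ t in Ioi (0:ℝ),
        (4 * Real.pi * t) ^ (-(d:ℝ) / 2) * Real.exp (-(r ^ 2 / (4 * t))) * un t) ≤
      C * (r ^ (-(d:ℝ)) * ell ((1 / r) ^ 2)) := by
  obtain ⟨c, C, t₀, hc, hC, ht₀, hu⟩ := h
  obtain ⟨C₀, hC₀, hexp⟩ := exp_bound d hd
  have hd' : (3:ℝ) ≤ d := by exact_mod_cast hd
  have hpi := Real.pi_pos
  have hpi3 := Real.pi_gt_three
  set s : ℝ := (d:ℝ) / 2 with hs
  have hs1 : 1 < s := by rw [hs]; linarith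
  have hds : (d:ℝ) = 2 * s := by rw [hs]; ring
  have hneg : -(d:ℝ) / 2 = -s := by rw [hs]; ring
  rw [hneg, hds]
  refine ⟨(8 * Real.pi) ^ (-s) * Real.exp (-(1 / 4)) * (c / 2), C₀ * C + C / (s - 1),
    min 1 (t₀ / 2), by positivity, ?_, by positivity, ?_⟩
  · have : 0 < s - 1 := by linarith
    positivity
  intro r hr hr0
  have hr1 : r < 1 := hr0.trans_le (min_le_left _ _)
  have hr2 : r < t₀ / 2 := hr0.trans_le (min_le_right _ _)
  have hrt : 2 * r ^ 2 < t₀ := by nlinarith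
  set R := r ^ 2 with hR
  have hR0 : 0 < R := by positivity
  have hRr : r ^ (-(2 * s)) = R ^ (-s) := by
    rw [hR, ← Real.rpow_natCast r 2, ← Real.rpow_mul hr.le]; norm_num
  have hRi : (1 / r) ^ 2 = 1 / R := by rw [hR]; field_simp
  rw [hRr, hRi]
  set E := ell (1 / R) with hE
  have hE0 : 0 < E := hpos _ (by positivity)
  set F : ℝ → ℝ := fun t => (4 * Real.pi * t) ^ (-s) * Real.exp (-(R / (4 * t))) * un t with hF
  have hF0 : ∀ t, 0 < t → 0 ≤ F t := fun t ht => by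
    have := (hupos t ht).le
    positivity
  have hpow : ∀ t, 0 < t → (4 * Real.pi * t) ^ (-s) ≤ t ^ (-s) := fun t ht =>
    Real.rpow_le_rpow_of_nonpos ht (by nlinarith) (by linarith)
  -- pointwise upper bounds
  have hF1 : ∀ t ∈ Ioc 0 R, F t ≤ C₀ * C * R ^ (-s) / R * E := by
    rintro t ⟨ht, htR⟩
    have h1 := hpow t ht
    have h2 := (hu t ht (by linarith)).2
    have h3 : ell (1 / t) ≤ E := hanti _ _ (by positivity) (one_div_le_one_div_of_le ht htR)
    have h4 := hexp (R / t) (by rw [le_div_iff₀ ht]; linarith)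
    have h5 : un t ≤ C * (E / t) := h2.trans (by gcongr)
    have e1 : R / t / 4 = R / (4 * t) := by field_simp
    rw [e1, Real.div_rpow hR0.le ht.le, div_mul_eq_mul_div, div_le_iff₀ (by positivity)] at h4
    have e2 : R ^ (s + 1) = R ^ s * R := by rw [Real.rpow_add hR0, Real.rpow_one]
    have e3 : t ^ (s + 1) = t ^ s * t := by rw [Real.rpow_add ht, Real.rpow_one]
    rw [e2, e3] at h4
    have q0 := (hupos t ht).le
    have q1 : 0 < t ^ s := by positivity
    have q2 : 0 < R ^ s := by positivity
    calc F t ≤ t ^ (-s) * Real.exp (-(R / (4 * t))) * (C * (E / t)) := by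
          simp only [hF]; gcongr
      _ = (R ^ s * R * Real.exp (-(R / (4 * t)))) * (C * E / (t ^ s * t * (R ^ s * R))) := by
          rw [Real.rpow_neg ht.le]; field_simp
      _ ≤ (C₀ * (t ^ s * t)) * (C * E / (t ^ s * t * (R ^ s * R))) := by gcongr
      _ = _ := by rw [Real.rpow_neg hR0.le]; field_simp
  have hF2 : ∀ t ∈ Ioi R, F t ≤ (C * (E / R)) * t ^ (-s) := by
    intro t ht
    have htR : R < t := ht
    have ht0 : 0 < t := by linarith
    have h1 := hpow t ht0
    have h2 := (hu R hR0 (by linarith)).2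
    have h3 : un t ≤ C * (E / R) := (hudec R t hR0 htR.le).trans h2
    have h4 : Real.exp (-(R / (4 * t))) ≤ 1 :=
      Real.exp_le_one_iff.2 (by have : 0 < R / (4 * t) := by positivity
                                linarith)
    have := (hupos t ht0).le
    calc F t ≤ t ^ (-s) * 1 * (C * (E / R)) := by simp only [hF]; gcongr
      _ = _ := by ring
  have hmeas : AEStronglyMeasurable F (volume.restrict (Ioi 0)) := by
    have hun : AEMeasurable un (volume.restrict (Ioi 0)) :=
      aemeasurable_restrict_of_antitoneOn measurableSet_Ioi
        (fun a ha b _ hab => hudec a b ha hab)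
    have h1 : AEMeasurable (fun t : ℝ => (4 * Real.pi * t) ^ (-s) * Real.exp (-(R / (4 * t))))
        (volume.restrict (Ioi 0)) := by
      apply Measurable.aemeasurable
      fun_prop
    exact (h1.mul hun).aestronglyMeasurable
  have hsub1 : Ioc 0 R ⊆ Ioi (0:ℝ) := fun t ht => ht.1
  have hsub2 : Ioi R ⊆ Ioi (0:ℝ) := fun t ht => lt_trans hR0 ht
  have hc1 : IntegrableOn (fun _ : ℝ => C₀ * C * R ^ (-s) / R * E) (Ioc 0 R) :=
    integrableOn_const (by simp)
  have hc2 : IntegrableOn (fun t : ℝ => (C * (E / R)) * t ^ (-s)) (Ioi R) :=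
    (integrableOn_Ioi_rpow_of_lt (by linarith) hR0).const_mul _
  have hi1 : IntegrableOn F (Ioc 0 R) := by
    refine Integrable.mono' hc1 (hmeas.mono_set hsub1) ?_
    filter_upwards [ae_restrict_mem measurableSet_Ioc] with t ht
    rw [Real.norm_of_nonneg (hF0 t ht.1)]
    exact hF1 t ht
  have hi2 : IntegrableOn F (Ioi R) := by
    refine Integrable.mono' hc2 (hmeas.mono_set hsub2) ?_
    filter_upwards [ae_restrict_mem measurableSet_Ioi] with t ht
    rw [Real.norm_of_nonneg (hF0 t (hsub2 ht))]
    exact hF2 t ht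
  have hun : Ioc 0 R ∪ Ioi R = Ioi 0 := Ioc_union_Ioi_eq_Ioi hR0.le
  have hi : IntegrableOn F (Ioi 0) := by
    rw [← hun]; exact hi1.union hi2
  constructor
  · have hsub : Ioc R (2 * R) ⊆ Ioi (0:ℝ) := fun t ht => lt_trans hR0 ht.1
    have h1 : ∫ t in Ioc R (2 * R), (8 * Real.pi * R) ^ (-s) * Real.exp (-(1 / 4)) * un (2 * R) ≤
        ∫ t in Ioc R (2 * R), F t := by
      apply setIntegral_mono_on (integrableOn_const (by simp)) (hi.mono_set hsub) measurableSet_Ioc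
      rintro t ⟨ht1, ht2⟩
      have ht0 : 0 < t := by linarith
      have a1 : (8 * Real.pi * R) ^ (-s) ≤ (4 * Real.pi * t) ^ (-s) :=
        Real.rpow_le_rpow_of_nonpos (by positivity) (by nlinarith) (by linarith)
      have a2 : Real.exp (-(1 / 4)) ≤ Real.exp (-(R / (4 * t))) := by
        apply Real.exp_le_exp.2
        apply neg_le_neg
        rw [div_le_div_iff₀ (by positivity) (by norm_num)]
        linarith
      have a3 := hudec t (2 * R) ht0 ht2
      have a4 := (hupos (2 * R) (by positivity)).le
      simp only [hF]
      gcongr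
    have h2 : ∫ t in Ioc R (2 * R), F t ≤ ∫ t in Ioi 0, F t := by
      apply setIntegral_mono_set hi
      · filter_upwards [ae_restrict_mem measurableSet_Ioi] with t ht
        exact hF0 t ht
      · exact hsub.eventuallyLE
    refine le_trans ?_ (h1.trans h2)
    rw [setIntegral_const, Real.volume_real_Ioc_of_le (by linarith), smul_eq_mul]
    have b1 := (hu (2 * R) (by positivity) hrt).1
    have b2 : E ≤ ell (1 / (2 * R)) :=
      hanti _ _ (by positivity) (one_div_le_one_div_of_le hR0 (by linarith))
    have b3 : c * (E / (2 * R)) ≤ un (2 * R) := le_trans (by gcongr) b1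
    rw [Real.mul_rpow (by positivity) hR0.le]
    calc _ = (2 * R - R) * ((8 * Real.pi) ^ (-s) * R ^ (-s) * Real.exp (-(1 / 4))
            * (c * (E / (2 * R)))) := by field_simp; ring
      _ ≤ _ := by
          have : 0 ≤ 2 * R - R := by linarith
          gcongr
  · rw [← hun, setIntegral_union (Ioc_disjoint_Ioi le_rfl) measurableSet_Ioi hi1 hi2]
    have h1 := setIntegral_mono_on hi1 hc1 measurableSet_Ioc hF1
    have h2 := setIntegral_mono_on hi2 hc2 measurableSet_Ioi hF2
    rw [setIntegral_const, Real.volume_real_Ioc_of_le hR0.le, smul_eq_mul] at h1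
    rw [integral_const_mul, integral_Ioi_rpow_of_lt (by linarith) hR0] at h2
    have e1 : (R - 0) * (C₀ * C * R ^ (-s) / R * E) = C₀ * C * (R ^ (-s) * E) := by
      field_simp; ring
    have e2 : C * (E / R) * (-R ^ (-s + 1) / (-s + 1)) = C / (s - 1) * (R ^ (-s) * E) := by
      rw [Real.rpow_add hR0, Real.rpow_one]
      have : s - 1 ≠ 0 := by linarith
      have : -s + 1 ≠ 0 := by linarith
      field_simp
      ring
    rw [e1] at h1
    rw [e2] at h2
    linarith

lemma tgt_eq (m : ℕ) (d : ℕ) (r : ℝ) :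
    r ^ (-(d:ℝ)) / iterLog (m + 1) (1 / r) ^ 2 *
          ∏ k ∈ Finset.Icc 1 (m + 1 - 1), (iterLog k (1 / r))⁻¹ = r ^ (-(d:ℝ)) * tgt m (1 / r) := by
  have : ∏ k ∈ Finset.Icc 1 (m + 1 - 1), (iterLog k (1 / r))⁻¹
      = (∏ k ∈ Finset.range m, iterLog (k + 1) (1 / r))⁻¹ := by
    rw [← Finset.prod_inv_distrib]
    have := Finset.prod_Ico_eq_prod_range (fun k => (iterLog k (1 / r))⁻¹) 1 (m + 1)
    simp only [Nat.add_sub_cancel] at this ⊢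
    have e : Finset.Icc 1 m = Finset.Ico 1 (m + 1) := by ext; simp
    rw [e, this]
    exact Finset.prod_congr rfl fun k _ => by rw [add_comm]
  rw [this]
  unfold tgt
  rw [one_div (iterLog (m + 1) (1 / r) ^ 2 * _), mul_inv]
  ring

/-- The Green function profile of the iterated geometric stable process satisfies
`g_n(r) ≍ r^{-d} (log_n(1/r))^{-2} ∏_{k=1}^{n-1} (log_k(1/r))⁻¹` as `r → 0+`. -/
theorem iterated_geometric_stable_green_asymp
    (β : ℝ) (hβ0 : 0 < β) (hβ2 : β ≤ 2)
    (n : ℕ) (hn : 1 ≤ n)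
    (un : ℝ → ℝ)
    (hupos : ∀ t, 0 < t → 0 < un t)
    (hudec : ∀ s t, 0 < s → s ≤ t → un t ≤ un s)
    (hun : ∀ l, 0 < l →
      ∫ t in Ioi (0:ℝ), Real.exp (-(l * t)) * un t = 1 / phiIter β n l)
    (d : ℕ) (hd : 3 ≤ d)
    (gn : ℝ → ℝ)
    (hg : ∀ r, 0 < r → gn r =
      ∫ t in Ioi (0:ℝ), (4 * Real.pi * t) ^ (-(d:ℝ) / 2) * Real.exp (-(r ^ 2 / (4 * t))) * un t) :
    ∃ c C r₀ : ℝ, 0 < c ∧ c ≤ C ∧ 0 < r₀ ∧ ∀ r, 0 < r → r < r₀ →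
      c * (r ^ (-(d:ℝ)) / iterLog n (1 / r) ^ 2 *
          ∏ k ∈ Finset.Icc 1 (n - 1), (iterLog k (1 / r))⁻¹) ≤ gn r ∧
      gn r ≤ C * (r ^ (-(d:ℝ)) / iterLog n (1 / r) ^ 2 *
          ∏ k ∈ Finset.Icc 1 (n - 1), (iterLog k (1 / r))⁻¹) := by
  obtain ⟨m, rfl⟩ : ∃ m, n = m + 1 := ⟨n - 1, by omega⟩
  have hint : ∀ l, 0 < l → IntegrableOn (fun t => Real.exp (-(l * t)) * un t) (Ioi 0) := by
    intro l hl
    by_contra hcon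
    have h1 := hun l hl
    rw [integral_undef hcon] at h1
    have := one_div_pos.2 (phi_pos (β := β) (m + 1) hl)
    linarith
  obtain ⟨A, hA, hD⟩ := D_bounds hβ0 hβ2 m
  have hub := u_bounds un (fun l => 1 / phiIter β (m + 1) l) (ell β m) hupos hudec hint hun
    (fun l hl => ell_pos m hl) (fun x y hx hxy => ell_anti hβ0 m hx hxy) (2 ^ (m + 2))
    (by positivity) (fun l hl => ell_half hβ0 hβ2 m hl) A hA hD
  obtain ⟨c, C, r₀, hc, hC, hr₀, h⟩ := g_bounds un (ell β m) hupos hudec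
    (fun l hl => ell_pos m hl) (fun x y hx hxy => ell_anti hβ0 m hx hxy) d hd hub
  obtain ⟨c', C', hc', hC', h'⟩ := ell_tgt hβ0 hβ2 m
  obtain ⟨L, hL⟩ := eventually_atTop.1 h'
  have hmain : ∀ r, 0 < r → r < min r₀ (1 / max L 1) →
      0 < r ^ (-(d:ℝ)) * tgt m (1 / r) ∧
      (c * c') * (r ^ (-(d:ℝ)) * tgt m (1 / r)) ≤ gn r ∧
      gn r ≤ (C * C') * (r ^ (-(d:ℝ)) * tgt m (1 / r)) := by
    intro r hr hr0
    have hr1 : r < r₀ := hr0.trans_le (min_le_left _ _)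
    have hr2 : r < 1 / max L 1 := hr0.trans_le (min_le_right _ _)
    have hM : 0 < max L 1 := lt_max_of_lt_right one_pos
    have hL' : L ≤ 1 / r := by
      refine (le_max_left L 1).trans ?_
      rw [lt_div_iff₀ hM] at hr2
      rw [le_div_iff₀ hr]
      linarith
    obtain ⟨k1, k2, k3⟩ := hL _ hL'
    obtain ⟨g1, g2⟩ := h r hr hr1
    rw [← hg r hr] at g1 g2
    have hp : 0 < r ^ (-(d:ℝ)) := by positivity
    refine ⟨by positivity, ?_, ?_⟩
    · refine le_trans ?_ g1
      calc _ = c * (r ^ (-(d:ℝ)) * (c' * tgt m (1 / r))) := by ring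
        _ ≤ _ := by gcongr
    · refine g2.trans ?_
      calc _ ≤ C * (r ^ (-(d:ℝ)) * (C' * tgt m (1 / r))) := by gcongr
        _ = _ := by ring
  have hM : 0 < max L 1 := lt_max_of_lt_right one_pos
  refine ⟨c * c', max (c * c') (C * C'), min r₀ (1 / max L 1), by positivity, le_max_left _ _,
    by positivity, fun r hr hr0 => ?_⟩
  rw [tgt_eq]
  obtain ⟨k0, k1, k2⟩ := hmain r hr hr0
  exact ⟨k1, k2.trans (mul_le_mul_of_nonneg_right (le_max_right _ _) k0.le)⟩
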